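/- Let q be a (sufficiently smooth) solution of the barotropic vorticity equation q_t + J(ψ,q) + βψ_x = f + νΔq − rq, q = Δψ, with boundary conditions q = 0, ψ = 0 on ∂D. Then the enstrophy ‖q(t)‖² satisfies the differential inequality d/dt ‖q(t)‖² ≤ −2α ‖q(t)‖² + (1/r) ‖f(t)‖² for all t ≥ 0, where α = r/2 + πν/|D| − (|β|/2)(|D|/π + 1). -/

import Mathlib

open MeasureTheory Real Filter Topology

/-- Partial derivative in the `x` direction. -/
noncomputable def pdx (u : ℝ × ℝ → ℝ) (p : ℝ × ℝ) : ℝ := fderiv ℝ u p (1, 0)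

/-- Partial derivative in the `y` direction. -/
noncomputable def pdy (u : ℝ × ℝ → ℝ) (p : ℝ × ℝ) : ℝ := fderiv ℝ u p (0, 1)

/-- The Jacobian operator `J(u,v) = u_x v_y - u_y v_x`. -/
noncomputable def jac (u v : ℝ × ℝ → ℝ) (p : ℝ × ℝ) : ℝ :=
  pdx u p * pdy v p - pdy u p * pdx v p

/-- The Laplacian `Δu = u_xx + u_yy`. -/
noncomputable def lap (u : ℝ × ℝ → ℝ) (p : ℝ × ℝ) : ℝ :=
  pdx (pdx u) p + pdy (pdy u) p

/-- The squared `L²(D)` norm `‖u‖² = ∫_D u² dxdy`. -/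
noncomputable def l2sq (D : Set (ℝ × ℝ)) (u : ℝ × ℝ → ℝ) : ℝ :=
  ∫ p in D, (u p) ^ 2

/-- The `L²(D)` norm. -/
noncomputable def l2norm (D : Set (ℝ × ℝ)) (u : ℝ × ℝ → ℝ) : ℝ :=
  Real.sqrt (l2sq D u)

/-- The squared `L²(D)` norm of the gradient, `‖∇u‖² = ∫_D |∇u|² dxdy`. -/
noncomputable def gradsq (D : Set (ℝ × ℝ)) (u : ℝ × ℝ → ℝ) : ℝ :=
  ∫ p in D, ((pdx u p) ^ 2 + (pdy u p) ^ 2)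

/-- The `L²(D)` norm of the gradient. -/
noncomputable def gradNorm (D : Set (ℝ × ℝ)) (u : ℝ × ℝ → ℝ) : ℝ :=
  Real.sqrt (gradsq D u)

/-- The area `|D|` of the domain. -/
noncomputable def area (D : Set (ℝ × ℝ)) : ℝ := (volume D).toReal

/-- The constant `α = r/2 + πν/|D| - (|β|/2)(|D|/π + 1)`. -/
noncomputable def alphaConst (D : Set (ℝ × ℝ)) (β ν r : ℝ) : ℝ :=
  r / 2 + π * ν / area D - |β| / 2 * (area D / π + 1)

/-- A space-time field that is smooth jointly in time and space. -/
def SmoothField (u : ℝ → ℝ × ℝ → ℝ) : Prop :=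
  ContDiff ℝ (⊤ : ℕ∞) (Function.uncurry u)

/-- A space-time field that is mean-square integrable in space and time
(on the time interval `[0,∞)` and the spatial domain `D`). -/
def MeanSquareIntegrable (D : Set (ℝ × ℝ)) (f : ℝ → ℝ × ℝ → ℝ) : Prop :=
  (∀ t, 0 ≤ t → Integrable (fun p => (f t p) ^ 2) (volume.restrict D)) ∧
  (∀ T, 0 < T → IntervalIntegrable (fun t => l2sq D (f t)) volume 0 T)

/-- `SolvesBVE D β ν r q ψ f g` says that the vorticity `q`, with streamfunction `ψ`,
solves the barotropic vorticity equation
`q_t + J(ψ,q) + β ψ_x = f + ν Δq - r q + g` on the domain `D` for all times `t ≥ 0`,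
with the relation `q = Δψ` and zero boundary conditions `q = 0`, `ψ = 0` on `∂D`.
The extra field `g` is an additional forcing term (e.g. a subgrid-scale stress,
a stochastic parameterization, or `0`). -/
def SolvesBVE (D : Set (ℝ × ℝ)) (β ν r : ℝ) (q ψ f g : ℝ → ℝ × ℝ → ℝ) : Prop :=
  (∀ t, 0 ≤ t → ∀ p ∈ D, q t p = lap (ψ t) p) ∧
  (∀ t, 0 ≤ t → ∀ p ∈ frontier D, q t p = 0 ∧ ψ t p = 0) ∧
  (∀ t, 0 ≤ t → ∀ p ∈ D,
    deriv (fun s => q s p) t + jac (ψ t) (q t) p + β * pdx (ψ t) p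
      = f t p + ν * lap (q t) p - r * q t p + g t p)

/-
Testing the vorticity equation with `q` turns the enstrophy rate into
`2(⟨q, f⟩ - β⟨q, ψ_x⟩ - ν‖∇q‖² - r‖q‖²)`: the advection term integrates to zero because `q J(ψ, q)`
is a divergence of a field vanishing on `∂D`. Young's inequality bounds the forcing and `β` terms,
and the Poincaré inequality `‖u‖² ≤ (|D|/π)‖∇u‖²` controls both the viscous term and, through
`‖∇ψ‖² = -⟨ψ, Δψ⟩`, the term `ψ_x`.

Both integration by parts and the Poincaré inequality are obtained one line at a time, however
irregular `∂D` is: a `C¹` function of one variable has zero derivative at all but countably many of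
its zeros, so if it vanishes on the boundary of an open set, its extension by zero from that set
still satisfies the fundamental theorem of calculus.
-/

section L2

variable {α : Type*} {mα : MeasurableSpace α} {μ : Measure α} {f g : α → ℝ}

lemma sq_integral_mul_le (hf : MemLp f 2 μ) (hg : MemLp g 2 μ) :
    (∫ x, f x * g x ∂μ) ^ 2 ≤ (∫ x, f x ^ 2 ∂μ) * ∫ x, g x ^ 2 ∂μ := by
  have inner_toLp : ∀ {u v : α → ℝ} (hu : MemLp u 2 μ) (hv : MemLp v 2 μ),
      inner ℝ (hu.toLp u) (hv.toLp v) = ∫ x, u x * v x ∂μ := fun hu hv => by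
    rw [L2.inner_def]
    refine integral_congr_ae ?_
    filter_upwards [hu.coeFn_toLp, hv.coeFn_toLp] with x hux hvx
    simp only [hux, hvx, RCLike.inner_apply', conj_trivial]
  simpa only [inner_toLp, ← sq] using real_inner_mul_inner_self_le (hf.toLp f) (hg.toLp g)

lemma two_mul_abs_integral_mul_le (hf : MemLp f 2 μ) (hg : MemLp g 2 μ) {ε : ℝ} (hε : 0 < ε) :
    2 * |∫ x, f x * g x ∂μ| ≤ ε * ∫ x, f x ^ 2 ∂μ + 1 / ε * ∫ x, g x ^ 2 ∂μ := by
  have hA : 0 ≤ ∫ x, f x ^ 2 ∂μ := by positivity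
  have hB : 0 ≤ ∫ x, g x ^ 2 ∂μ := by positivity
  have hCS := sq_integral_mul_le hf hg
  set A := ∫ x, f x ^ 2 ∂μ
  set B := ∫ x, g x ^ 2 ∂μ
  set P := ∫ x, f x * g x ∂μ
  have hsq : (2 * P) ^ 2 ≤ (ε * A + 1 / ε * B) ^ 2 := by
    have hsplit : (ε * A + 1 / ε * B) ^ 2 = 4 * (A * B) + (ε * A - 1 / ε * B) ^ 2 := by
      field_simp
      ring
    nlinarith [sq_nonneg (ε * A - 1 / ε * B)]
  simpa [abs_mul] using abs_le_of_sq_le_sq hsq (by positivity)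

end L2

section Line

variable {F : Type*} [NormedAddCommGroup F] [NormedSpace ℝ F]

lemma countable_setOf_eq_zero_and_deriv_ne_zero {g g' : ℝ → F}
    (hg : ∀ x, HasDerivAt g (g' x) x) : {x | g x = 0 ∧ g' x ≠ 0}.Countable := by
  refine (countable_setOfPred_isolated_right_within (s := {x | g x = 0})).mono ?_
  rintro x ⟨hgx, hg'x⟩
  refine ⟨hgx, ?_⟩
  rw [← empty_mem_iff_bot, mem_nhdsWithin_iff_eventually]
  have hne := (hg x).eventually_ne (c := 0) hg'x
  rw [eventually_nhdsWithin_iff] at hne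
  filter_upwards [hne] with y hy hyx
  exact hy (ne_of_gt hyx.2) hyx.1

lemma hasDerivAt_indicator {U : Set ℝ} (hU : IsOpen U) {g g' : ℝ → F}
    {x : ℝ} (hg : HasDerivAt g (g' x) x) (h0 : x ∈ frontier U → g x = 0 ∧ g' x = 0) :
    HasDerivAt (U.indicator g) (U.indicator g' x) x := by
  by_cases hxU : x ∈ U
  · rw [Set.indicator_of_mem hxU]
    exact hg.congr_of_eventuallyEq (Set.eqOn_indicator.eventuallyEq_of_mem (hU.mem_nhds hxU))
  rw [Set.indicator_of_notMem hxU]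
  by_cases hxc : x ∈ closure U
  · obtain ⟨hgx, hg'x⟩ := h0 ⟨hxc, fun h => hxU (interior_subset h)⟩
    rw [hg'x, hasDerivAt_iff_isLittleO] at hg
    rw [hasDerivAt_iff_isLittleO]
    refine (Asymptotics.isBigO_of_le _ fun y => ?_).trans_isLittleO hg
    simpa [hxU, hgx] using norm_indicator_le_norm_self g y
  · refine (hasDerivAt_const x (0 : F)).congr_of_eventuallyEq ?_
    filter_upwards [isClosed_closure.isOpen_compl.mem_nhds hxc] with y hy
    exact Set.indicator_of_notMem (fun h => hy (subset_closure h)) g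

lemma integral_indicator_deriv_eq_sub [CompleteSpace F] {U : Set ℝ} (hU : IsOpen U) {g g' : ℝ → F}
    (hg : ∀ x, HasDerivAt g (g' x) x) (hg' : Continuous g') (h0 : ∀ x ∈ frontier U, g x = 0)
    (a b : ℝ) :
    ∫ x in a..b, U.indicator g' x = U.indicator g b - U.indicator g a := by
  have hgc : Continuous g := continuous_iff_continuousAt.2 fun x => (hg x).continuousAt
  refine integral_eq_of_hasDerivAt_off_countable _ _
    (countable_setOf_eq_zero_and_deriv_ne_zero hg)
    (continuous_indicator h0 hgc.continuousOn).continuousOn (fun x hx => ?_) ?_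
  · refine hasDerivAt_indicator hU (hg x) fun hxU => ⟨h0 x hxU, ?_⟩
    by_contra hne
    exact hx.2 ⟨h0 x hxU, hne⟩
  · rw [intervalIntegrable_iff]
    exact (hg'.intervalIntegrable a b).def'.indicator hU.measurableSet

lemma two_mul_norm_indicator_le_integral [CompleteSpace F] {U : Set ℝ} (hU : IsOpen U)
    (hUb : Bornology.IsBounded U) {g g' : ℝ → F} (hg : ∀ x, HasDerivAt g (g' x) x)
    (hg' : Continuous g') (h0 : ∀ x ∈ frontier U, g x = 0) (x : ℝ) :
    2 * ‖U.indicator g x‖ ≤ ∫ s, ‖U.indicator g' s‖ := by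
  by_cases hx : x ∈ U
  swap
  · rw [Set.indicator_of_notMem hx, norm_zero, mul_zero]
    positivity
  have hi : Integrable fun s => ‖U.indicator g' s‖ :=
    (((hg'.continuousOn.integrableOn_compact hUb.isCompact_closure).mono_set
      subset_closure).integrable_indicator hU.measurableSet).norm
  obtain ⟨R, hR⟩ := hUb.subset_ball 0
  rw [Real.ball_eq_Ioo, zero_sub, zero_add] at hR
  have hleft : ‖U.indicator g x‖ ≤ ∫ s in (-R)..x, ‖U.indicator g' s‖ := by
    have hRU : -R ∉ U := fun h => lt_irrefl _ (hR h).1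
    simpa [integral_indicator_deriv_eq_sub hU hg hg' h0, hRU] using
      intervalIntegral.norm_integral_le_integral_norm (f := U.indicator g') (μ := volume)
        (hR hx).1.le
  have hright : ‖U.indicator g x‖ ≤ ∫ s in x..R, ‖U.indicator g' s‖ := by
    have hRU : R ∉ U := fun h => lt_irrefl _ (hR h).2
    simpa [integral_indicator_deriv_eq_sub hU hg hg' h0, hRU] using
      intervalIntegral.norm_integral_le_integral_norm (f := U.indicator g') (μ := volume)
        (hR hx).2.le
  calc 2 * ‖U.indicator g x‖
      ≤ (∫ s in (-R)..x, ‖U.indicator g' s‖) + ∫ s in x..R, ‖U.indicator g' s‖ := by linarith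
    _ = ∫ s in (-R)..R, ‖U.indicator g' s‖ :=
      intervalIntegral.integral_add_adjacent_intervals hi.intervalIntegrable
        hi.intervalIntegrable
    _ = ∫ s in Set.Ioc (-R) R, ‖U.indicator g' s‖ :=
      intervalIntegral.integral_of_le ((hR hx).1.trans (hR hx).2).le
    _ ≤ ∫ s, ‖U.indicator g' s‖ :=
      setIntegral_le_integral hi (Eventually.of_forall fun s => norm_nonneg _)

end Line

section Bounded

variable {X F : Type*} [PseudoMetricSpace X] [ProperSpace X] [MeasurableSpace X] [BorelSpace X]
  {μ : Measure X} [IsFiniteMeasureOnCompacts μ] [NormedAddCommGroup F] {D : Set X} {g : X → F}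

lemma memLp_restrict_of_isBounded (hDb : Bornology.IsBounded D) (hg : Continuous g) (p : ENNReal) :
    MemLp g p (μ.restrict D) := by
  have hK : IsCompact (closure D) := hDb.isCompact_closure
  have hcl : MeasurableSet (closure D) := isClosed_closure.measurableSet
  have : Fact (μ (closure D) < ⊤) := ⟨hK.measure_lt_top⟩
  obtain ⟨C, hC⟩ := hK.exists_bound_of_continuousOn hg.continuousOn
  exact (MemLp.of_bound (hg.continuousOn.aestronglyMeasurable_of_isCompact hK hcl) C
    (ae_restrict_of_forall_mem hcl hC)).mono_measure
    (Measure.restrict_mono subset_closure le_rfl)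

lemma integrableOn_of_isBounded (hDb : Bornology.IsBounded D) (hg : Continuous g) :
    IntegrableOn g D μ :=
  memLp_one_iff_integrable.1 (memLp_restrict_of_isBounded hDb hg 1)

lemma hasDerivAt_setIntegral [NormedSpace ℝ F] (hDb : Bornology.IsBounded D) {h h' : ℝ → X → F}
    (hh : ∀ s, Continuous (h s)) (hderiv : ∀ s x, HasDerivAt (fun r => h r x) (h' s x) s)
    (hh' : Continuous (Function.uncurry h')) (t : ℝ) :
    HasDerivAt (fun s => ∫ x in D, h s x ∂μ) (∫ x in D, h' t x ∂μ) t := by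
  obtain ⟨C, hC⟩ := ((isCompact_closedBall t 1).prod
    hDb.isCompact_closure).exists_bound_of_continuousOn hh'.continuousOn
  refine (hasDerivAt_integral_of_dominated_loc_of_deriv_le (bound := fun _ => C)
    (Metric.closedBall_mem_nhds t one_pos)
    (Eventually.of_forall fun s => (integrableOn_of_isBounded hDb (hh s)).aestronglyMeasurable)
    (integrableOn_of_isBounded hDb (hh t))
    (integrableOn_of_isBounded hDb (hh'.comp (Continuous.prodMk_right t))).aestronglyMeasurable
    ?_ (integrableOn_const hDb.measure_lt_top.ne)
    (Eventually.of_forall fun x s _ => hderiv s x)).2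
  refine ae_restrict_of_ae_restrict_of_subset subset_closure ?_
  exact ae_restrict_of_forall_mem isClosed_closure.measurableSet fun x hx s hs => hC (s, x) ⟨hs, hx⟩

end Bounded

section VanishingOnFrontier

variable {E F : Type*} [NormedAddCommGroup E] [NormedSpace ℝ E]
  [NormedAddCommGroup F] [NormedSpace ℝ F] {D : Set E} {u : E → F}

lemma contDiff_fderiv_apply_const {m n : WithTop ℕ∞} (hu : ContDiff ℝ n u) (hmn : m + 1 ≤ n)
    (v : E) : ContDiff ℝ m fun p => fderiv ℝ u p v :=
  (hu.fderiv_right hmn).clm_apply contDiff_const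

lemma continuous_fderiv_apply_const (hu : ContDiff ℝ 1 u) (v : E) :
    Continuous fun p => fderiv ℝ u p v :=
  (contDiff_fderiv_apply_const (m := 0) hu (by simp) v).continuous

lemma hasDerivAt_comp_add_smul (hu : Differentiable ℝ u) (p v : E) (s : ℝ) :
    HasDerivAt (fun r : ℝ => u (p + r • v)) (fderiv ℝ u (p + s • v) v) s := by
  have hline : HasDerivAt (fun r : ℝ => p + r • v) v s := by
    simpa using ((hasDerivAt_id s).smul_const v).const_add p
  exact (hu _).hasFDerivAt.comp_hasDerivAt s hline

variable [CompleteSpace F]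

lemma integral_indicator_fderiv_add_smul (hD : IsOpen D) (hu : ContDiff ℝ 1 u)
    (h0 : ∀ p ∈ frontier D, u p = 0) (p v : E) (a b : ℝ) :
    ∫ s in a..b, D.indicator (fun z => fderiv ℝ u z v) (p + s • v)
      = D.indicator u (p + b • v) - D.indicator u (p + a • v) := by
  have hline : Continuous fun s : ℝ => p + s • v := by fun_prop
  exact integral_indicator_deriv_eq_sub (hD.preimage hline)
    (hasDerivAt_comp_add_smul (hu.differentiable one_ne_zero) p v)
    ((continuous_fderiv_apply_const hu v).comp hline)
    (fun s hs => h0 _ (hline.frontier_preimage_subset D hs)) a b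

lemma two_mul_norm_indicator_le_integral_norm_fderiv (hD : IsOpen D)
    (hDb : Bornology.IsBounded D) (hu : ContDiff ℝ 1 u) (h0 : ∀ p ∈ frontier D, u p = 0)
    (p : E) {v : E} (hv : v ≠ 0) (s : ℝ) :
    2 * ‖D.indicator u (p + s • v)‖
      ≤ ∫ r : ℝ, ‖D.indicator (fun z => fderiv ℝ u z v) (p + r • v)‖ := by
  have hline : Continuous fun r : ℝ => p + r • v := by fun_prop
  have hbdd : Bornology.IsBounded ((fun r : ℝ => p + r • v) ⁻¹' D) := by
    have := (antilipschitzWith_lineMap (𝕜 := ℝ) (p₁ := p) (p₂ := p + v)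
      (by simpa using hv)).isBounded_preimage hDb
    simpa [AffineMap.lineMap_apply, add_comm, Set.preimage] using this
  exact two_mul_norm_indicator_le_integral (hD.preimage hline) hbdd
    (hasDerivAt_comp_add_smul (hu.differentiable one_ne_zero) p v)
    ((continuous_fderiv_apply_const hu v).comp hline)
    (fun r hr => h0 _ (hline.frontier_preimage_subset D hr)) s

variable [MeasurableSpace E] [BorelSpace E] [SecondCountableTopology E] {μ : Measure E} [SFinite μ]
  [μ.IsAddRightInvariant]

/- Average `∂ᵥu` over the translates `p + s v`, `0 ≤ s ≤ 1`, and swap the integrals: on each line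
the fundamental theorem of calculus leaves a difference of two translates of `u`. -/
theorem setIntegral_fderiv_apply_eq_zero (hD : IsOpen D) (hu : ContDiff ℝ 1 u)
    (h0 : ∀ p ∈ frontier D, u p = 0) (v : E) (hui : IntegrableOn u D μ)
    (hdi : IntegrableOn (fun p => fderiv ℝ u p v) D μ) :
    ∫ p in D, fderiv ℝ u p v ∂μ = 0 := by
  set G : E → F := D.indicator fun p => fderiv ℝ u p v with hGdef
  have hu' : Continuous fun p => fderiv ℝ u p v := continuous_fderiv_apply_const hu v
  have hG : Integrable G μ := hdi.integrable_indicator hD.measurableSet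
  have hw : Integrable (D.indicator u) μ := hui.integrable_indicator hD.measurableSet
  have hshift : Continuous fun z : ℝ × E => z.2 + z.1 • v := by fun_prop
  have hprod : Integrable (Function.uncurry fun (s : ℝ) p => G (p + s • v))
      ((volume.restrict (Set.uIoc 0 1)).prod μ) := by
    have hmeas : StronglyMeasurable (Function.uncurry fun (s : ℝ) p => G (p + s • v)) :=
      (hu'.comp hshift).stronglyMeasurable.indicator (hD.preimage hshift).measurableSet
    refine (integrable_prod_iff hmeas.aestronglyMeasurable).2
      ⟨Eventually.of_forall fun s => hG.comp_add_right (s • v), ?_⟩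
    have hconst (s : ℝ) : ∫ p, ‖G (p + s • v)‖ ∂μ = ∫ p, ‖G p‖ ∂μ :=
      integral_add_right_eq_self (fun p => ‖G p‖) (s • v)
    simp [Function.uncurry, hconst]
  calc ∫ p in D, fderiv ℝ u p v ∂μ
      = ∫ p, G p ∂μ := (integral_indicator hD.measurableSet).symm
    _ = ∫ _ in (0 : ℝ)..1, ∫ p, G p ∂μ := by simp
    _ = ∫ s in (0 : ℝ)..1, ∫ p, G (p + s • v) ∂μ := by
      simp only [integral_add_right_eq_self]
    _ = ∫ p, (∫ s in (0 : ℝ)..1, G (p + s • v)) ∂μ := intervalIntegral_integral_swap hprod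
    _ = ∫ p, (D.indicator u (p + v) - D.indicator u p) ∂μ := by
      simp [hGdef, integral_indicator_fderiv_add_smul hD hu h0]
    _ = 0 := by
      rw [integral_sub (hw.comp_add_right v) hw, integral_add_right_eq_self, sub_self]

end VanishingOnFrontier

section IntegrationByParts

variable {E : Type*} [NormedAddCommGroup E] [NormedSpace ℝ E] [FiniteDimensional ℝ E]
  [MeasurableSpace E] [BorelSpace E] {μ : Measure E} [μ.IsAddHaarMeasure] {D : Set E}

theorem setIntegral_mul_fderiv_apply_eq_neg (hD : IsOpen D) (hDb : Bornology.IsBounded D)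
    {u w : E → ℝ} (hu : ContDiff ℝ 1 u) (hw : ContDiff ℝ 1 w) (h0 : ∀ p ∈ frontier D, u p = 0)
    (v : E) :
    ∫ p in D, u p * fderiv ℝ w p v ∂μ = -∫ p in D, fderiv ℝ u p v * w p ∂μ := by
  have hu' : Continuous fun p => fderiv ℝ u p v := continuous_fderiv_apply_const hu v
  have hw' : Continuous fun p => fderiv ℝ w p v := continuous_fderiv_apply_const hw v
  have huw : ContDiff ℝ 1 fun p => u p * w p := hu.mul hw
  have hprod (p : E) : fderiv ℝ (fun z => u z * w z) p v
      = u p * fderiv ℝ w p v + fderiv ℝ u p v * w p := by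
    rw [fderiv_fun_mul (hu.differentiable one_ne_zero p) (hw.differentiable one_ne_zero p)]
    simp [mul_comm]
  have hdiv := setIntegral_fderiv_apply_eq_zero (μ := μ) hD huw
    (fun p hp => by simp [h0 p hp]) v (integrableOn_of_isBounded hDb huw.continuous)
    (integrableOn_of_isBounded hDb (continuous_fderiv_apply_const huw v))
  simp only [hprod] at hdiv
  have hint : IntegrableOn (fun p => u p * fderiv ℝ w p v) D μ :=
    integrableOn_of_isBounded hDb (hu.continuous.mul hw')
  have hint' : IntegrableOn (fun p => fderiv ℝ u p v * w p) D μ :=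
    integrableOn_of_isBounded hDb (hu'.mul hw.continuous)
  rw [eq_neg_iff_add_eq_zero, ← integral_add hint hint', hdiv]

end IntegrationByParts

section Planar

variable {D : Set (ℝ × ℝ)} {u v ψ : ℝ × ℝ → ℝ}

lemma contDiff_pdx {m n : WithTop ℕ∞} (hu : ContDiff ℝ n u) (hmn : m + 1 ≤ n) :
    ContDiff ℝ m (pdx u) :=
  contDiff_fderiv_apply_const hu hmn (1, 0)

lemma contDiff_pdy {m n : WithTop ℕ∞} (hu : ContDiff ℝ n u) (hmn : m + 1 ≤ n) :
    ContDiff ℝ m (pdy u) :=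
  contDiff_fderiv_apply_const hu hmn (0, 1)

lemma continuous_pdx (hu : ContDiff ℝ 1 u) : Continuous (pdx u) :=
  continuous_fderiv_apply_const hu (1, 0)

lemma continuous_pdy (hu : ContDiff ℝ 1 u) : Continuous (pdy u) :=
  continuous_fderiv_apply_const hu (0, 1)

lemma continuous_lap (hu : ContDiff ℝ 2 u) : Continuous (lap u) :=
  (continuous_pdx (contDiff_pdx hu (by norm_num))).add
    (continuous_pdy (contDiff_pdy hu (by norm_num)))

lemma continuous_jac (hu : ContDiff ℝ 1 u) (hv : ContDiff ℝ 1 v) : Continuous (jac u v) :=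
  ((continuous_pdx hu).mul (continuous_pdy hv)).sub ((continuous_pdy hu).mul (continuous_pdx hv))

lemma pdx_pdy_comm (hu : ContDiff ℝ 2 u) (p : ℝ × ℝ) : pdx (pdy u) p = pdy (pdx u) p := by
  have hdiff : DifferentiableAt ℝ (fderiv ℝ u) p :=
    (hu.fderiv_right (m := 1) (by norm_num)).differentiable one_ne_zero p
  have second_deriv (v w : ℝ × ℝ) :
      fderiv ℝ (fun z => fderiv ℝ u z v) p w = fderiv ℝ (fderiv ℝ u) p w v := by
    simp [fderiv_clm_apply hdiff (differentiableAt_const v)]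
  have hsymm : IsSymmSndFDerivAt ℝ u p := hu.contDiffAt.isSymmSndFDerivAt (by simp)
  exact (second_deriv _ _).trans ((hsymm _ _).trans (second_deriv _ _).symm)

lemma area_nonneg (D : Set (ℝ × ℝ)) : 0 ≤ area D :=
  ENNReal.toReal_nonneg

lemma l2sq_nonneg (D : Set (ℝ × ℝ)) (u : ℝ × ℝ → ℝ) : 0 ≤ l2sq D u :=
  integral_nonneg fun _ => sq_nonneg _

lemma gradsq_nonneg (D : Set (ℝ × ℝ)) (u : ℝ × ℝ → ℝ) : 0 ≤ gradsq D u :=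
  integral_nonneg fun _ => by positivity

lemma gradsq_eq_add (hDb : Bornology.IsBounded D) (hu : ContDiff ℝ 1 u) :
    gradsq D u = l2sq D (pdx u) + l2sq D (pdy u) :=
  integral_add (integrableOn_of_isBounded hDb ((continuous_pdx hu).pow 2))
    (integrableOn_of_isBounded hDb ((continuous_pdy hu).pow 2))

lemma setIntegral_mul_lap (hD : IsOpen D) (hDb : Bornology.IsBounded D) (hu : ContDiff ℝ 1 u)
    (hv : ContDiff ℝ 2 v) (h0 : ∀ p ∈ frontier D, u p = 0) :
    ∫ p in D, u p * lap v p = -∫ p in D, (pdx u p * pdx v p + pdy u p * pdy v p) := by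
  have hvx : ContDiff ℝ 1 (pdx v) := contDiff_pdx hv (by norm_num)
  have hvy : ContDiff ℝ 1 (pdy v) := contDiff_pdy hv (by norm_num)
  have hx : ∫ p in D, u p * pdx (pdx v) p = -∫ p in D, pdx u p * pdx v p :=
    setIntegral_mul_fderiv_apply_eq_neg hD hDb hu hvx h0 (1, 0)
  have hy : ∫ p in D, u p * pdy (pdy v) p = -∫ p in D, pdy u p * pdy v p :=
    setIntegral_mul_fderiv_apply_eq_neg hD hDb hu hvy h0 (0, 1)
  have huc := hu.continuous
  have hux := continuous_pdx hu
  have huy := continuous_pdy hu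
  have hvxc := hvx.continuous
  have hvyc := hvy.continuous
  have hvxx := continuous_pdx hvx
  have hvyy := continuous_pdy hvy
  simp only [lap, mul_add]
  rw [integral_add, integral_add, hx, hy, neg_add]
  all_goals exact integrableOn_of_isBounded hDb (by fun_prop)

lemma setIntegral_mul_lap_self (hD : IsOpen D) (hDb : Bornology.IsBounded D)
    (hu : ContDiff ℝ 2 u) (h0 : ∀ p ∈ frontier D, u p = 0) :
    ∫ p in D, u p * lap u p = -gradsq D u := by
  simp only [setIntegral_mul_lap hD hDb (hu.of_le one_le_two) hu h0, ← sq, gradsq]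

lemma setIntegral_mul_jac_eq_zero (hD : IsOpen D) (hDb : Bornology.IsBounded D)
    (hu : ContDiff ℝ 1 u) (hψ : ContDiff ℝ 2 ψ) (h0 : ∀ p ∈ frontier D, u p = 0) :
    ∫ p in D, u p * jac ψ u p = 0 := by
  have husq : ContDiff ℝ 1 fun p => u p ^ 2 := hu.pow 2
  have husq0 : ∀ p ∈ frontier D, u p ^ 2 = 0 := fun p hp => by simp [h0 p hp]
  have hψx : ContDiff ℝ 1 (pdx ψ) := contDiff_pdx hψ (by norm_num)
  have hψy : ContDiff ℝ 1 (pdy ψ) := contDiff_pdy hψ (by norm_num)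
  have hx : ∫ p in D, u p ^ 2 * pdx (pdy ψ) p = -∫ p in D, pdx (fun z => u z ^ 2) p * pdy ψ p :=
    setIntegral_mul_fderiv_apply_eq_neg hD hDb husq hψy husq0 (1, 0)
  have hy : ∫ p in D, u p ^ 2 * pdy (pdx ψ) p = -∫ p in D, pdy (fun z => u z ^ 2) p * pdx ψ p :=
    setIntegral_mul_fderiv_apply_eq_neg hD hDb husq hψx husq0 (0, 1)
  have two_mul_jac (p : ℝ × ℝ) : 2 * (u p * jac ψ u p)
      = pdy (fun z => u z ^ 2) p * pdx ψ p - pdx (fun z => u z ^ 2) p * pdy ψ p := by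
    simp only [pdx, pdy, jac, fderiv_fun_pow 2 (hu.differentiable one_ne_zero p)]
    simp only [Nat.add_one_sub_one, pow_one, nsmul_eq_mul, Nat.cast_ofNat,
      smul_apply, smul_eq_mul]
    ring
  have hux := continuous_pdx husq
  have huy := continuous_pdy husq
  have hψxc := hψx.continuous
  have hψyc := hψy.continuous
  have hzero : 2 * ∫ p in D, u p * jac ψ u p = 0 := by
    simp only [pdx_pdy_comm hψ] at hx
    rw [← integral_const_mul]
    simp only [two_mul_jac]
    rw [integral_sub (integrableOn_of_isBounded hDb (by fun_prop))
      (integrableOn_of_isBounded hDb (by fun_prop)), sub_eq_zero]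
    exact neg_injective (hy.symm.trans hx)
  simpa using hzero

/- Pointwise `4u²` is at most the product of the integrals of `|u_x|` and `|u_y|` along the two
coordinate lines, and that product is a function of `y` times a function of `x`. -/
lemma four_mul_l2sq_le (hD : IsOpen D) (hDb : Bornology.IsBounded D) (hu : ContDiff ℝ 1 u)
    (h0 : ∀ p ∈ frontier D, u p = 0) :
    4 * l2sq D u ≤ (∫ p in D, |pdx u p|) * ∫ p in D, |pdy u p| := by
  have hix : Integrable (fun p => ‖D.indicator (pdx u) p‖) (volume.prod volume) :=
    ((integrableOn_of_isBounded hDb (continuous_pdx hu)).integrable_indicator hD.measurableSet).norm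
  have hiy : Integrable (fun p => ‖D.indicator (pdy u) p‖) (volume.prod volume) :=
    ((integrableOn_of_isBounded hDb (continuous_pdy hu)).integrable_indicator hD.measurableSet).norm
  set A : ℝ → ℝ := fun y => ∫ x, ‖D.indicator (pdx u) (x, y)‖
  set B : ℝ → ℝ := fun x => ∫ y, ‖D.indicator (pdy u) (x, y)‖
  have integral_norm_indicator (g : ℝ × ℝ → ℝ) :
      ∫ p, ‖D.indicator g p‖ = ∫ p in D, |g p| := by
    simp only [norm_indicator_eq_indicator_norm, integral_indicator hD.measurableSet, norm_eq_abs]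
  have hAint : ∫ y, A y = ∫ p in D, |pdx u p| := by
    rw [← integral_norm_indicator, Measure.volume_eq_prod, integral_prod_symm _ hix]
  have hBint : ∫ x, B x = ∫ p in D, |pdy u p| := by
    rw [← integral_norm_indicator, Measure.volume_eq_prod, integral_prod _ hiy]
  have hpt (p : ℝ × ℝ) : D.indicator (fun z => 4 * u z ^ 2) p ≤ B p.1 * A p.2 := by
    have hx : 2 * ‖D.indicator u p‖ ≤ A p.2 := by
      have hline := two_mul_norm_indicator_le_integral_norm_fderiv hD hDb hu h0
        (0, p.2) (v := (1, 0)) (by simp) p.1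
      simp only [Prod.smul_mk, Prod.mk_add_mk, smul_eq_mul, mul_one, mul_zero, zero_add,
        add_zero] at hline
      exact hline
    have hy : 2 * ‖D.indicator u p‖ ≤ B p.1 := by
      have hline := two_mul_norm_indicator_le_integral_norm_fderiv hD hDb hu h0
        (p.1, 0) (v := (0, 1)) (by simp) p.2
      simp only [Prod.smul_mk, Prod.mk_add_mk, smul_eq_mul, mul_one, mul_zero, zero_add,
        add_zero] at hline
      exact hline
    calc D.indicator (fun z => 4 * u z ^ 2) p
        = 2 * ‖D.indicator u p‖ * (2 * ‖D.indicator u p‖) := by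
          by_cases hp : p ∈ D
          · simp only [Set.indicator_of_mem hp, norm_eq_abs]
            linear_combination -4 * abs_mul_abs_self (u p)
          · simp [hp]
      _ ≤ B p.1 * A p.2 := by gcongr
  calc 4 * l2sq D u = ∫ p, D.indicator (fun z => 4 * u z ^ 2) p := by
        rw [integral_indicator hD.measurableSet, integral_const_mul, l2sq]
    _ ≤ ∫ p : ℝ × ℝ, B p.1 * A p.2 :=
        integral_mono ((integrableOn_of_isBounded hDb (by fun_prop)).integrable_indicator
          hD.measurableSet) (hiy.integral_prod_left.mul_prod hix.integral_prod_right) hpt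
    _ = (∫ p in D, |pdx u p|) * ∫ p in D, |pdy u p| := by
        rw [← hAint, ← hBint, mul_comm]
        exact integral_prod_mul B A

lemma sq_setIntegral_abs_le (hDb : Bornology.IsBounded D) (hu : Continuous u) :
    (∫ p in D, |u p|) ^ 2 ≤ area D * l2sq D u := by
  have := sq_integral_mul_le (memLp_restrict_of_isBounded (μ := volume) hDb continuous_one 2)
    (memLp_restrict_of_isBounded hDb hu.abs 2)
  simpa [area, l2sq, measureReal_def] using this

theorem l2sq_le_area_mul_gradsq (hD : IsOpen D) (hDb : Bornology.IsBounded D)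
    (hu : ContDiff ℝ 1 u) (h0 : ∀ p ∈ frontier D, u p = 0) :
    l2sq D u ≤ area D / 8 * gradsq D u := by
  have hxy := four_mul_l2sq_le hD hDb hu h0
  have hx := sq_setIntegral_abs_le hDb (continuous_pdx hu)
  have hy := sq_setIntegral_abs_le hDb (continuous_pdy hu)
  rw [gradsq_eq_add hDb hu]
  linarith [two_mul_le_add_sq (∫ p in D, |pdx u p|) (∫ p in D, |pdy u p|)]

lemma l2sq_le_area_div_pi_mul_gradsq (hD : IsOpen D) (hDb : Bornology.IsBounded D)
    (hu : ContDiff ℝ 1 u) (h0 : ∀ p ∈ frontier D, u p = 0) :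
    l2sq D u ≤ area D / π * gradsq D u := by
  have hA := area_nonneg D
  have hG := gradsq_nonneg D u
  refine (l2sq_le_area_mul_gradsq hD hDb hu h0).trans ?_
  gcongr
  linarith [pi_le_four]

lemma gradsq_le_area_div_pi_mul_l2sq_lap (hD : IsOpen D) (hDb : Bornology.IsBounded D)
    (hψ : ContDiff ℝ 2 ψ) (h0 : ∀ p ∈ frontier D, ψ p = 0) :
    gradsq D ψ ≤ area D / π * l2sq D (lap ψ) := by
  have hL := l2sq_nonneg D (lap ψ)
  rcases (gradsq_nonneg D ψ).eq_or_lt with hG | hG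
  · have hA : 0 ≤ area D := ENNReal.toReal_nonneg
    rw [← hG]
    positivity
  refine le_of_mul_le_mul_left ?_ hG
  calc gradsq D ψ * gradsq D ψ = (∫ p in D, ψ p * lap ψ p) ^ 2 := by
        rw [setIntegral_mul_lap_self hD hDb hψ h0, neg_sq, sq]
    _ ≤ l2sq D ψ * l2sq D (lap ψ) :=
        sq_integral_mul_le (memLp_restrict_of_isBounded hDb hψ.continuous 2)
          (memLp_restrict_of_isBounded hDb (continuous_lap hψ) 2)
    _ ≤ area D / π * gradsq D ψ * l2sq D (lap ψ) := by
        gcongr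
        exact l2sq_le_area_div_pi_mul_gradsq hD hDb (hψ.of_le one_le_two) h0
    _ = gradsq D ψ * (area D / π * l2sq D (lap ψ)) := by ring

end Planar

section SpaceTime

variable {E F : Type*} [NormedAddCommGroup E] [NormedSpace ℝ E]
  [NormedAddCommGroup F] [NormedSpace ℝ F] {n : WithTop ℕ∞} {u : ℝ → E → F}

lemma contDiff_of_uncurry (hu : ContDiff ℝ n (Function.uncurry u)) (t : ℝ) : ContDiff ℝ n (u t) :=
  hu.comp (contDiff_const.prodMk contDiff_id)

lemma hasDerivAt_of_contDiff_uncurry (hu : ContDiff ℝ 1 (Function.uncurry u)) (t : ℝ) (p : E) :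
    HasDerivAt (fun s => u s p) (fderiv ℝ (Function.uncurry u) (t, p) (1, 0)) t :=
  HasFDerivAt.comp_hasDerivAt (f := fun s => (s, p)) t
    (hu.differentiable one_ne_zero (t, p)).hasFDerivAt
    ((hasDerivAt_id t).prodMk (hasDerivAt_const t p))

lemma continuous_uncurry_deriv (hu : ContDiff ℝ 1 (Function.uncurry u)) :
    Continuous (Function.uncurry fun s p => deriv (fun r => u r p) s) := by
  simp only [fun s p => (hasDerivAt_of_contDiff_uncurry hu s p).deriv]
  exact continuous_fderiv_apply_const hu (1, 0)

end SpaceTime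

section Enstrophy

variable {D : Set (ℝ × ℝ)} {β ν r t : ℝ} {q : ℝ → ℝ × ℝ → ℝ} {u ψ f : ℝ × ℝ → ℝ}

lemma hasDerivAt_l2sq (hDb : Bornology.IsBounded D) (hq : ContDiff ℝ 1 (Function.uncurry q))
    (t : ℝ) :
    HasDerivAt (fun s => l2sq D (q s))
      (2 * ∫ p in D, q t p * deriv (fun s => q s p) t) t := by
  have hcont : Continuous (Function.uncurry fun s p => 2 * (q s p * deriv (fun r => q r p) s)) :=
    (hq.continuous.mul (continuous_uncurry_deriv hq)).const_mul 2
  rw [← integral_const_mul]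
  refine hasDerivAt_setIntegral hDb
    (fun s => (contDiff_of_uncurry hq s).continuous.pow 2) (fun s p => ?_) hcont t
  simpa [mul_assoc] using
    (hasDerivAt_of_contDiff_uncurry hq s p).differentiableAt.hasDerivAt.fun_pow 2

theorem setIntegral_mul_tendency_eq (hD : IsOpen D) (hDb : Bornology.IsBounded D)
    {w : ℝ × ℝ → ℝ} (hu : ContDiff ℝ 2 u) (hψ : ContDiff ℝ 2 ψ) (hw : Continuous w)
    (hu0 : ∀ p ∈ frontier D, u p = 0)
    (heq : ∀ p ∈ D, w p + jac ψ u p + β * pdx ψ p = f p + ν * lap u p - r * u p) :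
    ∫ p in D, u p * w p
      = (∫ p in D, u p * f p) - β * (∫ p in D, u p * pdx ψ p) - ν * gradsq D u - r * l2sq D u := by
  have hu1 : ContDiff ℝ 1 u := hu.of_le one_le_two
  have hψ1 : ContDiff ℝ 1 ψ := hψ.of_le one_le_two
  have huc := hu.continuous
  have hψx := continuous_pdx hψ1
  have hlap := continuous_lap hu
  have hjac := continuous_jac hψ1 hu1
  have hf : ∫ p in D, u p * f p = ∫ p in D, (u p * w p + u p * jac ψ u p + β * (u p * pdx ψ p)
      - ν * (u p * lap u p) + r * u p ^ 2) :=
    setIntegral_congr_fun hD.measurableSet fun p hp => by linear_combination -u p * heq p hp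
  rw [integral_add, integral_sub, integral_add, integral_add, integral_const_mul,
    integral_const_mul, integral_const_mul, setIntegral_mul_jac_eq_zero hD hDb hu1 hψ hu0,
    setIntegral_mul_lap_self hD hDb hu hu0] at hf
  · rw [hf, l2sq]
    ring
  all_goals exact integrableOn_of_isBounded hDb (by fun_prop)

lemma pi_div_area_mul_l2sq_le_gradsq (hD : IsOpen D) (hDb : Bornology.IsBounded D)
    (hu : ContDiff ℝ 1 u) (h0 : ∀ p ∈ frontier D, u p = 0) :
    π / area D * l2sq D u ≤ gradsq D u := by
  have hA := area_nonneg D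
  rw [← inv_div, inv_mul_eq_div]
  exact div_le_of_le_mul₀ (by positivity) (gradsq_nonneg D u)
    ((l2sq_le_area_div_pi_mul_gradsq hD hDb hu h0).trans_eq (mul_comm _ _))

lemma two_mul_abs_setIntegral_mul_pdx_le (hD : IsOpen D) (hDb : Bornology.IsBounded D)
    (hψ : ContDiff ℝ 2 ψ) (hψ0 : ∀ p ∈ frontier D, ψ p = 0) (hu : Continuous u)
    (hlap : ∀ p ∈ D, u p = lap ψ p) :
    2 * |∫ p in D, u p * pdx ψ p| ≤ (area D / π + 1) * l2sq D u := by
  have hψ1 : ContDiff ℝ 1 ψ := hψ.of_le one_le_two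
  have hψx : l2sq D (pdx ψ) ≤ area D / π * l2sq D u := by
    have hL : l2sq D u = l2sq D (lap ψ) :=
      setIntegral_congr_fun hD.measurableSet fun p hp => by simp only [hlap p hp]
    rw [hL]
    linarith [l2sq_nonneg D (pdy ψ), gradsq_eq_add hDb hψ1,
      gradsq_le_area_div_pi_mul_l2sq_lap hD hDb hψ hψ0]
  have hYoung := two_mul_abs_integral_mul_le (memLp_restrict_of_isBounded (μ := volume) hDb hu 2)
    (memLp_restrict_of_isBounded hDb (continuous_pdx hψ1) 2) one_pos
  simp only [one_mul, div_one] at hYoung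
  change _ ≤ l2sq D u + l2sq D (pdx ψ) at hYoung
  linarith

lemma memLp_forcing (hD : IsOpen D) (hDb : Bornology.IsBounded D) {w : ℝ × ℝ → ℝ}
    (hu : ContDiff ℝ 2 u) (hψ : ContDiff ℝ 2 ψ) (hw : Continuous w)
    (heq : ∀ p ∈ D, w p + jac ψ u p + β * pdx ψ p = f p + ν * lap u p - r * u p)
    (s : ENNReal) : MemLp f s (volume.restrict D) := by
  have hψ1 : ContDiff ℝ 1 ψ := hψ.of_le one_le_two
  have huc := hu.continuous
  have hψx := continuous_pdx hψ1
  have hlap := continuous_lap hu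
  have hjac := continuous_jac hψ1 (hu.of_le one_le_two)
  have hcont : Continuous fun p => w p + jac ψ u p + β * pdx ψ p - ν * lap u p + r * u p := by
    fun_prop
  refine (memLp_restrict_of_isBounded hDb hcont s).ae_eq
    (ae_restrict_of_forall_mem hD.measurableSet fun p hp => ?_)
  linear_combination heq p hp

theorem enstrophy_differential_inequality_general (hD : IsOpen D) (hDb : Bornology.IsBounded D)
    (hν : 0 ≤ ν) (hr : 0 < r) (hq : ContDiff ℝ 1 (Function.uncurry q)) (hqt : ContDiff ℝ 2 (q t))
    (hψ : ContDiff ℝ 2 ψ) (hlap : ∀ p ∈ D, q t p = lap ψ p)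
    (hq0 : ∀ p ∈ frontier D, q t p = 0) (hψ0 : ∀ p ∈ frontier D, ψ p = 0)
    (heq : ∀ p ∈ D, deriv (fun s => q s p) t + jac ψ (q t) p + β * pdx ψ p
      = f p + ν * lap (q t) p - r * q t p) :
    DifferentiableAt ℝ (fun s => l2sq D (q s)) t ∧
      deriv (fun s => l2sq D (q s)) t ≤
        -2 * alphaConst D β ν r * l2sq D (q t) + (1 / r) * l2sq D f := by
  have hrate := hasDerivAt_l2sq hDb hq t
  have hqt' : Continuous fun p => deriv (fun s => q s p) t :=
    (continuous_uncurry_deriv hq).comp (Continuous.prodMk_right t)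
  rw [setIntegral_mul_tendency_eq hD hDb hqt hψ hqt' hq0 heq] at hrate
  refine ⟨hrate.differentiableAt, hrate.deriv.trans_le ?_⟩
  have hforcing : 2 * |∫ p in D, q t p * f p| ≤ r * l2sq D (q t) + 1 / r * l2sq D f :=
    two_mul_abs_integral_mul_le (memLp_restrict_of_isBounded hDb hqt.continuous 2)
      (memLp_forcing hD hDb hqt hψ hqt' heq 2) hr
  have hbeta : |β| * (2 * |∫ p in D, q t p * pdx ψ p|)
      ≤ |β| * ((area D / π + 1) * l2sq D (q t)) :=
    mul_le_mul_of_nonneg_left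
      (two_mul_abs_setIntegral_mul_pdx_le hD hDb hψ hψ0 hqt.continuous hlap) (abs_nonneg β)
  have hvisc : ν * (π / area D * l2sq D (q t)) ≤ ν * gradsq D (q t) := by
    gcongr
    exact pi_div_area_mul_l2sq_le_gradsq hD hDb (hqt.of_le one_le_two) hq0
  have hqf := le_abs_self (∫ p in D, q t p * f p)
  have hqψx := neg_abs_le (β * ∫ p in D, q t p * pdx ψ p)
  rw [abs_mul] at hqψx
  calc 2 * ((∫ p in D, q t p * f p) - β * (∫ p in D, q t p * pdx ψ p) - ν * gradsq D (q t)
        - r * l2sq D (q t))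
      ≤ r * l2sq D (q t) + 1 / r * l2sq D f + |β| * ((area D / π + 1) * l2sq D (q t))
        - 2 * (ν * (π / area D * l2sq D (q t))) - 2 * (r * l2sq D (q t)) := by linarith
    _ = -2 * alphaConst D β ν r * l2sq D (q t) + 1 / r * l2sq D f := by
      rw [alphaConst]
      ring

end Enstrophy

/-- enstrophy differential inequality.
If `q` is a (sufficiently smooth) solution of the barotropic vorticity equation
`q_t + J(ψ,q) + βψ_x = f + νΔq - rq`, `q = Δψ`, with zero boundary conditions
on `∂D`, then the enstrophy `‖q(t)‖²` satisfies
`d/dt ‖q(t)‖² ≤ -2α ‖q(t)‖² + (1/r) ‖f(t)‖²` for all `t ≥ 0`,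
where `α = r/2 + πν/|D| - (|β|/2)(|D|/π + 1)`. -/
theorem enstrophy_differential_inequality
    (D : Set (ℝ × ℝ)) (hD : IsOpen D) (hDb : Bornology.IsBounded D)
    (β ν r : ℝ) (hν : 0 < ν) (hr : 0 < r)
    (q ψ f : ℝ → ℝ × ℝ → ℝ)
    (hq : SmoothField q) (hψ : SmoothField ψ)
    (hf : MeanSquareIntegrable D f)
    (hdiff : ∀ t, 0 ≤ t → DifferentiableAt ℝ (fun s => l2sq D (q s)) t)
    (hsol : SolvesBVE D β ν r q ψ f (fun _ _ => 0)) :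
    ∀ t, 0 ≤ t →
      deriv (fun s => l2sq D (q s)) t ≤
        -2 * alphaConst D β ν r * l2sq D (q t) + (1 / r) * l2sq D (f t) := by
  intro t ht
  have slice {u : ℝ → ℝ × ℝ → ℝ} (hu : SmoothField u) : ContDiff ℝ 2 (u t) :=
    contDiff_of_uncurry (hu.of_le (WithTop.coe_le_coe.2 le_top)) t
  exact (enstrophy_differential_inequality_general hD hDb hν.le hr
    (hq.of_le (WithTop.coe_le_coe.2 le_top)) (slice hq) (slice hψ) (hsol.1 t ht)
    (fun p hp => (hsol.2.1 t ht p hp).1) (fun p hp => (hsol.2.1 t ht p hp).2)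
    fun p hp => (hsol.2.2 t ht p hp).trans (add_zero _)).2
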